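/- arXiv:2110.11326 — 6 statements merged into one kernel-verified Lean document; each statement's English description precedes it below -/
import Mathlib

section
/- Let n > m ≥ 1 be integers, let a₁,…,aₙ ∈ ℝᵐ span ℝᵐ, and let Γ be a real (n−m)×n matrix whose rows are linearly independent and each of whose rows is a linear relation among the aᵢ, i.e. Σᵢ Γ_{r,i} aᵢ = 0 for every r. Let b ∈ ℝⁿ, set δ = Γb ∈ ℝ^{n−m}, and let γᵢ ∈ ℝ^{n−m} denote the i-th column of Γ. Then the following are equivalent: (i) there exist x₀ ∈ ℝᵐ and a real number c ≠ 0 such that bᵢ = c + ⟨aᵢ, x₀⟩ for every i (i.e., after a translation the polytope P = {x ∈ ℝᵐ : ⟨aᵢ,x⟩ + bᵢ ≥ 0 for all i} is presented with all offsets equal, the Fano condition); (ii) there exists a real number C ≠ 0 such that γ₁ + ⋯ + γₙ = C·δ. -/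
/-- Lemma `equivmon`, linear-algebraic form.
Let `n > m ≥ 1`, let `a₁,…,aₙ ∈ ℝᵐ` span `ℝᵐ`, and let `Γ` be a real `(n−m)×n` matrix with
linearly independent rows, each row being a linear relation among the `aᵢ`.  For `b ∈ ℝⁿ`,
set `δ = Γb` and let `γᵢ` be the `i`-th column of `Γ`.  Then the polytope
`P = {x : ⟨aᵢ,x⟩ + bᵢ ≥ 0}` admits a Fano presentation (all offsets equal after a translation)
iff `γ₁ + ⋯ + γₙ = C·δ` for some `C ≠ 0`. -/
theorem stmt_0 (n m : ℕ) (hm : 1 ≤ m) (hmn : m < n)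
    (a : Fin n → (Fin m → ℝ))
    (hspan : Submodule.span ℝ (Set.range a) = ⊤)
    (Γ : Matrix (Fin (n - m)) (Fin n) ℝ)
    (hindep : LinearIndependent ℝ (fun r : Fin (n - m) => Γ r))
    (hrel : ∀ r : Fin (n - m), ∑ i : Fin n, Γ r i • a i = 0)
    (b : Fin n → ℝ) :
    (∃ (x₀ : Fin m → ℝ) (c : ℝ), c ≠ 0 ∧
        ∀ i : Fin n, b i = c + ∑ j : Fin m, a i j * x₀ j)
      ↔ (∃ C : ℝ, C ≠ 0 ∧
        ∀ r : Fin (n - m), (∑ i : Fin n, Γ r i) = C * Γ.mulVec b r) := by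
  have hGA : ∀ x : Fin m → ℝ, Γ.mulVec ((Matrix.of a).mulVec x) = 0 := by
    intro x
    have h0 : Γ * Matrix.of a = 0 := by
      ext r j
      have := congrFun (hrel r) j
      simpa [Matrix.mul_apply, Finset.sum_apply] using this
    rw [Matrix.mulVec_mulVec, h0, Matrix.zero_mulVec]
  constructor
  · rintro ⟨x₀, c, hc, h⟩
    refine ⟨c⁻¹, inv_ne_zero hc, fun r => ?_⟩
    have hb : b = c • (fun _ => (1 : ℝ)) + (Matrix.of a).mulVec x₀ := by
      ext i
      simp [h i, Matrix.mulVec, dotProduct]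
    rw [hb, Matrix.mulVec_add, hGA, Matrix.mulVec_smul]
    simp [Matrix.mulVec, dotProduct, hc]
  · rintro ⟨C, hC, h⟩
    have hA : (Matrix.of a).rank = m := by
      rw [Matrix.rank_eq_finrank_span_row]
      change Module.finrank ℝ (Submodule.span ℝ (Set.range a)) = m
      rw [hspan]
      simp
    have hG : Γ.rank = n - m := by
      have := LinearIndependent.rank_matrix (M := Γ) hindep
      simpa using this
    have hle : LinearMap.range (Matrix.of a).mulVecLin ≤ LinearMap.ker Γ.mulVecLin := by
      rintro _ ⟨x, rfl⟩
      simpa using hGA x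
    have heq : LinearMap.range (Matrix.of a).mulVecLin = LinearMap.ker Γ.mulVecLin := by
      apply Submodule.eq_of_le_of_finrank_eq hle
      have h1 := LinearMap.finrank_range_add_finrank_ker Γ.mulVecLin
      have h2 : Module.finrank ℝ (LinearMap.range Γ.mulVecLin) = n - m := hG
      have h3 : Module.finrank ℝ (LinearMap.range (Matrix.of a).mulVecLin) = m := hA
      rw [Module.finrank_fin_fun] at h1
      omega
    have hk : b - C⁻¹ • (fun _ => (1 : ℝ)) ∈ LinearMap.ker Γ.mulVecLin := by
      rw [LinearMap.mem_ker, Matrix.mulVecLin_apply, Matrix.mulVec_sub, Matrix.mulVec_smul]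
      ext r
      have h4 : Γ.mulVec (fun _ => (1 : ℝ)) r = C * Γ.mulVec b r := by
        rw [← h r]
        simp [Matrix.mulVec, dotProduct]
      simp [h4, hC]
    rw [← heq] at hk
    obtain ⟨x, hx⟩ := hk
    refine ⟨x, C⁻¹, inv_ne_zero hC, fun i => ?_⟩
    have h5 := congrFun hx i
    simp [Matrix.mulVec, dotProduct] at h5
    linarith
end

section
/- Let n ≥ 1 and k ≥ 0 be integers and let γ₁,…,γₙ ∈ ℤᵏ. Let u, û ∈ ℝⁿ and φ, φ̂ ∈ ℝᵏ, and suppose that the ℤ-span (additive subgroup of ℝᵏ generated by) of {γᵢ − γⱼ : uᵢ ≠ 0 and uⱼ ≠ 0} equals the ℤ-span of {γᵢ − γⱼ : 1 ≤ i, j ≤ n}. If there exists a nonzero complex number c such that ûⱼ · exp(iπ⟨γⱼ, φ̂⟩) = c · uⱼ · exp(iπ⟨γⱼ, φ⟩) for every j = 1,…,n (i.e., the two vectors of ℂⁿ determine the same point of ℂP^{n−1}), then ⟨γᵢ − γⱼ, φ̂ − φ⟩ ∈ ℤ for all 1 ≤ i, j ≤ n; that is, φ̂ − φ lies in the dual lattice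 Λ* = {y ∈ ℝᵏ : ⟨γᵢ − γⱼ, y⟩ ∈ ℤ for all i, j}. -/
lemma aux_phase (r s A B : ℝ) (hr : r ≠ 0)
    (h : (r : ℂ) * (Complex.exp ((Real.pi * A : ℝ) * Complex.I))
      = s * Complex.exp ((Real.pi * B : ℝ) * Complex.I)) : ∃ z : ℤ, A - B = z := by
  have h2 : (r : ℂ) * Complex.exp ((Real.pi * (A - B) : ℝ) * Complex.I) = s := by
    have e : ((Real.pi * (A - B) : ℝ) : ℂ) * Complex.I
        = (Real.pi * A : ℝ) * Complex.I - (Real.pi * B : ℝ) * Complex.I := by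
      push_cast; ring
    rw [e, Complex.exp_sub, ← mul_div_assoc, h, mul_div_assoc,
      div_self (Complex.exp_ne_zero _), mul_one]
  have h3 := congrArg Complex.im h2
  rw [Complex.im_ofReal_mul, Complex.exp_ofReal_mul_I_im, Complex.ofReal_im] at h3
  have h4 := (mul_eq_zero.mp h3).resolve_left hr
  obtain ⟨z, hz⟩ := Real.sin_eq_zero_iff.mp h4
  refine ⟨z, ?_⟩
  have hp := Real.pi_ne_zero
  apply mul_left_cancel₀ hp
  linarith

/-- key step in Lemma `embc1`.
If the ℤ-span of `{γᵢ − γⱼ : uᵢ ≠ 0, uⱼ ≠ 0}` equals the ℤ-span of all differences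
`γᵢ − γⱼ`, and the two vectors `(ûⱼ e^{iπ⟨γⱼ,φ̂⟩})ⱼ` and `(uⱼ e^{iπ⟨γⱼ,φ⟩})ⱼ` of `ℂⁿ`
are proportional by a nonzero constant, then `⟨γᵢ − γⱼ, φ̂ − φ⟩ ∈ ℤ` for all `i, j`,
i.e. `φ̂ − φ` lies in the dual lattice `Λ*`. -/
theorem stmt_1 (n k : ℕ) (hn : 1 ≤ n)
    (γ : Fin n → (Fin k → ℤ)) (u uh : Fin n → ℝ) (φ φh : Fin k → ℝ)
    (hlat : AddSubgroup.closure
        {x : Fin k → ℝ | ∃ i j : Fin n, u i ≠ 0 ∧ u j ≠ 0 ∧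
            x = fun t => ((γ i t : ℝ) - (γ j t : ℝ))}
      = AddSubgroup.closure
        {x : Fin k → ℝ | ∃ i j : Fin n,
            x = fun t => ((γ i t : ℝ) - (γ j t : ℝ))})
    (hc : ∃ c : ℂ, c ≠ 0 ∧ ∀ j : Fin n,
        (uh j : ℂ) * Complex.exp ((Real.pi * ∑ t, (γ j t : ℝ) * φh t : ℝ) * Complex.I)
          = c * ((u j : ℂ) *
              Complex.exp ((Real.pi * ∑ t, (γ j t : ℝ) * φ t : ℝ) * Complex.I))) :
    ∀ i j : Fin n, ∃ z : ℤ,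
      (∑ t, ((γ i t : ℝ) - (γ j t : ℝ)) * (φh t - φ t)) = (z : ℝ) := by
  obtain ⟨c, hc0, hc⟩ := hc
  have key : ∀ x ∈ AddSubgroup.closure
        {x : Fin k → ℝ | ∃ i j : Fin n, u i ≠ 0 ∧ u j ≠ 0 ∧
            x = fun t => ((γ i t : ℝ) - (γ j t : ℝ))},
      ∃ z : ℤ, ∑ t, x t * (φh t - φ t) = (z : ℝ) := by
    intro x hx
    induction hx using AddSubgroup.closure_induction with
    | mem x hx =>
      obtain ⟨i, j, hi, hj, rfl⟩ := hx
      have hui : uh i ≠ 0 := by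
        intro h0
        have := hc i
        rw [h0] at this
        have h1 : c * ((u i : ℂ) *
              Complex.exp ((Real.pi * ∑ t, (γ i t : ℝ) * φ t : ℝ) * Complex.I)) ≠ 0 :=
          mul_ne_zero hc0 (mul_ne_zero (by exact_mod_cast hi) (Complex.exp_ne_zero _))
        apply h1
        rw [← this]; simp
      have ei := hc i
      have ej := hc j
      obtain ⟨z, hz⟩ := aux_phase (uh i * u j) (uh j * u i)
        ((∑ t, (γ i t : ℝ) * φh t) + ∑ t, (γ j t : ℝ) * φ t)
        ((∑ t, (γ j t : ℝ) * φh t) + ∑ t, (γ i t : ℝ) * φ t)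
        (mul_ne_zero hui hj) (by
          rw [mul_add, mul_add, Complex.ofReal_add, Complex.ofReal_add, add_mul, add_mul,
            Complex.exp_add, Complex.exp_add, Complex.ofReal_mul, Complex.ofReal_mul (uh j)]
          generalize Complex.exp ((Real.pi * ∑ t, (γ i t : ℝ) * φh t : ℝ) * Complex.I) = a at *
          generalize Complex.exp ((Real.pi * ∑ t, (γ j t : ℝ) * φh t : ℝ) * Complex.I) = b at *
          generalize Complex.exp ((Real.pi * ∑ t, (γ i t : ℝ) * φ t : ℝ) * Complex.I) = d at *
          generalize Complex.exp ((Real.pi * ∑ t, (γ j t : ℝ) * φ t : ℝ) * Complex.I) = e at *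
          linear_combination (u j * e : ℂ) * ei - (u i * d : ℂ) * ej)
      refine ⟨z, ?_⟩
      rw [← hz, ← Finset.sum_add_distrib, ← Finset.sum_add_distrib, ← Finset.sum_sub_distrib]
      exact Finset.sum_congr rfl fun t _ => by ring
    | zero => exact ⟨0, by simp⟩
    | add x y _ _ hx hy =>
      obtain ⟨a, ha⟩ := hx
      obtain ⟨b, hb⟩ := hy
      exact ⟨a + b, by simp only [Pi.add_apply, add_mul, Finset.sum_add_distrib, ha, hb]; push_cast; rfl⟩
    | neg x _ hx =>
      obtain ⟨a, ha⟩ := hx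
      exact ⟨-a, by simp only [Pi.neg_apply, neg_mul, Finset.sum_neg_distrib, ha]; push_cast; rfl⟩
  intro i j
  exact key (fun t => ((γ i t : ℝ) - (γ j t : ℝ)))
    (hlat ▸ AddSubgroup.subset_closure ⟨i, j, rfl⟩)
end

section
/- Let n, k be nonnegative integers, let γ₁,…,γₙ ∈ ℤᵏ, and set γ̃ⱼ = (1, γⱼ) ∈ ℤ^{k+1} (the vector γⱼ with a 1 prepended). Let S ⊆ {1,…,n}. If the ℤ-span of {γ̃ⱼ : j ∈ S} equals the ℤ-span of {γ̃₁,…,γ̃ₙ} (as subgroups of ℤ^{k+1}), then the ℤ-span of {γᵢ − γⱼ : i, j ∈ S} equals the ℤ-span of {γᵢ − γⱼ : 1 ≤ i, j ≤ n} (as subgroups of ℤᵏ). -/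
/-- Lemma `embc2`.
Let `γ₁,…,γₙ ∈ ℤᵏ` and `γ̃ⱼ = (1, γⱼ) ∈ ℤ^{k+1}`.  If for a subset `S ⊆ {1,…,n}` the
ℤ-span of `{γ̃ⱼ : j ∈ S}` equals the ℤ-span of all the `γ̃ⱼ`, then the ℤ-span of
`{γᵢ − γⱼ : i, j ∈ S}` equals the ℤ-span of all differences `γᵢ − γⱼ`. -/
theorem stmt_2 (n k : ℕ) (γ : Fin n → (Fin k → ℤ)) (S : Set (Fin n))
    (h : AddSubgroup.closure
          {v : Fin (k + 1) → ℤ | ∃ j ∈ S, v = Fin.cons (1 : ℤ) (γ j)}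
        = AddSubgroup.closure (Set.range fun j : Fin n => Fin.cons (1 : ℤ) (γ j))) :
    AddSubgroup.closure {v : Fin k → ℤ | ∃ i ∈ S, ∃ j ∈ S, v = γ i - γ j}
      = AddSubgroup.closure {v : Fin k → ℤ | ∃ i j : Fin n, v = γ i - γ j} := by
  have mem : ∀ i, (Fin.cons (1 : ℤ) (γ i) : Fin (k + 1) → ℤ) ∈ AddSubgroup.closure
      {v : Fin (k + 1) → ℤ | ∃ j ∈ S, v = Fin.cons (1 : ℤ) (γ j)} := by
    intro i
    rw [h]
    exact AddSubgroup.subset_closure ⟨i, rfl⟩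
  apply le_antisymm
  · apply AddSubgroup.closure_mono
    rintro v ⟨i, _, j, _, rfl⟩
    exact ⟨i, j, rfl⟩
  · rw [AddSubgroup.closure_le]
    rintro v ⟨i, j, rfl⟩
    rcases S.eq_empty_or_nonempty with hS | ⟨s, hs⟩
    · exfalso
      have := mem i
      simp only [hS, Set.mem_empty_iff_false, false_and, exists_false, Set.ofPred_false,
        AddSubgroup.closure_empty, AddSubgroup.mem_bot] at this
      have h0 := congrFun this 0
      simp at h0
    · have key : ∀ v : Fin (k + 1) → ℤ, v ∈ AddSubgroup.closure
          {v : Fin (k + 1) → ℤ | ∃ j ∈ S, v = Fin.cons (1 : ℤ) (γ j)} →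
          (fun a : Fin k => v a.succ - v 0 * γ s a) ∈
            AddSubgroup.closure {v : Fin k → ℤ | ∃ i ∈ S, ∃ j ∈ S, v = γ i - γ j} := by
        intro v hv
        induction hv using AddSubgroup.closure_induction with
        | mem x hx =>
          obtain ⟨j, hj, rfl⟩ := hx
          apply AddSubgroup.subset_closure
          refine ⟨j, hj, s, hs, ?_⟩
          ext a
          simp
        | zero =>
          convert AddSubgroup.zero_mem _ using 1
          ext a
          simp
        | add x y _ _ hx hy =>
          convert AddSubgroup.add_mem _ hx hy using 1
          ext a
          simp only [Pi.add_apply]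
          ring
        | neg x _ hx =>
          convert AddSubgroup.neg_mem _ hx using 1
          ext a
          simp only [Pi.neg_apply]
          ring
      have := AddSubgroup.sub_mem _ (key _ (mem i)) (key _ (mem j))
      rw [SetLike.mem_coe]
      convert this using 1
      ext a
      simp
end

section
/- Let n ≥ 1, let γ₁,…,γₙ ∈ ℤᵏ, and set γ̃ⱼ = (1, γⱼ) ∈ ℤ^{k+1}. Define Λ̃* = {x ∈ ℝ^{k+1} : ⟨γ̃ⱼ, x⟩ ∈ ℤ for all j} and Λ* = {y ∈ ℝᵏ : ⟨γᵢ − γⱼ, y⟩ ∈ ℤ for all i, j}. Let e₁ = (1,0,…,0) ∈ ℝ^{k+1}, and suppose ε̃₁,…,ε̃ₖ ∈ Λ̃* are such that ε̃₁,…,ε̃ₖ, e₁ are ℤ-linearly independent and generate Λ̃* as an abelian group. For r = 1,…,k let εᵣ ∈ ℝᵏ be obtained from ε̃ᵣ by deleting its first coordinate. Then ε₁,…,εₖ belong to Λ*, are ℤ-linearly independent, and generate Λ* as an abelian group; that is, they form a basis of the dual lattice Λ*. -/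
/-- Lemma `basisgen`.
With `γ̃ⱼ = (1, γⱼ)`, `Λ̃* = {x ∈ ℝ^{k+1} : ⟨γ̃ⱼ, x⟩ ∈ ℤ ∀ j}` and
`Λ* = {y ∈ ℝᵏ : ⟨γᵢ − γⱼ, y⟩ ∈ ℤ ∀ i,j}`: if `ε̃₁,…,ε̃ₖ ∈ Λ̃*` are such that
`e₁, ε̃₁, …, ε̃ₖ` are ℤ-linearly independent and generate `Λ̃*` as an abelian group, then
the vectors `εᵣ` obtained by deleting the first coordinate of `ε̃ᵣ` lie in `Λ*`, are
ℤ-linearly independent, and generate `Λ*` as an abelian group. -/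
theorem stmt_3 (n k : ℕ) (hn : 1 ≤ n) (γ : Fin n → (Fin k → ℤ))
    (εt : Fin k → (Fin (k + 1) → ℝ))
    (hmem : ∀ r : Fin k, ∀ j : Fin n, ∃ z : ℤ,
        (∑ t, ((Fin.cons (1 : ℤ) (γ j) : Fin (k + 1) → ℤ) t : ℝ) * εt r t) = (z : ℝ))
    (hindep : LinearIndependent ℤ
        (Fin.cons (Pi.single (0 : Fin (k + 1)) (1 : ℝ)) εt : Fin (k + 1) → Fin (k + 1) → ℝ))
    (hgen : (AddSubgroup.closure
          (Set.range (Fin.cons (Pi.single (0 : Fin (k + 1)) (1 : ℝ)) εt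
            : Fin (k + 1) → Fin (k + 1) → ℝ)) : Set (Fin (k + 1) → ℝ))
        = {x : Fin (k + 1) → ℝ | ∀ j : Fin n, ∃ z : ℤ,
            (∑ t, ((Fin.cons (1 : ℤ) (γ j) : Fin (k + 1) → ℤ) t : ℝ) * x t) = (z : ℝ)}) :
    (∀ r : Fin k, ∀ i j : Fin n, ∃ z : ℤ,
        (∑ t, ((γ i t : ℝ) - (γ j t : ℝ)) * εt r t.succ) = (z : ℝ))
    ∧ LinearIndependent ℤ (fun r : Fin k => fun t : Fin k => εt r t.succ)
    ∧ (AddSubgroup.closure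
          (Set.range fun r : Fin k => fun t : Fin k => εt r t.succ) : Set (Fin k → ℝ))
        = {y : Fin k → ℝ | ∀ i j : Fin n, ∃ z : ℤ,
            (∑ t, ((γ i t : ℝ) - (γ j t : ℝ)) * y t) = (z : ℝ)} := by
  have key : ∀ r : Fin k, ∀ i j : Fin n, ∃ z : ℤ,
        (∑ t, ((γ i t : ℝ) - (γ j t : ℝ)) * εt r t.succ) = (z : ℝ) := by
    intro r i j
    obtain ⟨a, ha⟩ := hmem r i
    obtain ⟨b, hb⟩ := hmem r j
    refine ⟨a - b, ?_⟩
    rw [Fin.sum_univ_succ] at ha hb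
    simp only [Fin.cons_zero, Fin.cons_succ] at ha hb
    simp only [sub_mul, Finset.sum_sub_distrib]
    push_cast
    linarith
  refine ⟨key, ?_, ?_⟩
  · rw [Fintype.linearIndependent_iff] at hindep ⊢
    intro c hc
    choose z hz using fun r => hmem r ⟨0, hn⟩
    have hc' : ∀ t : Fin k, ∑ r, (c r : ℝ) * εt r t.succ = 0 := by
      intro t
      have := congrFun hc t
      simpa [Finset.sum_apply] using this
    have h0 : ∑ r, (c r : ℝ) * εt r 0 = ((∑ r, c r * z r : ℤ) : ℝ) := by
      push_cast
      have e : ∀ r, (c r : ℝ) * z r = (c r : ℝ) * εt r 0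
          + ∑ t, (γ ⟨0, hn⟩ t : ℝ) * ((c r : ℝ) * εt r t.succ) := by
        intro r
        rw [← hz r, Fin.sum_univ_succ]
        simp only [Fin.cons_zero, Fin.cons_succ, mul_add, Finset.mul_sum]
        congr 1
        · simp
        · exact Finset.sum_congr rfl fun t _ => by ring
      simp only [e, Finset.sum_add_distrib]
      rw [Finset.sum_comm]
      simp [← Finset.mul_sum, hc']
    have := hindep (Fin.cons (-(∑ r, c r * z r)) c) (by
      rw [Fin.sum_univ_succ]
      simp only [Fin.cons_zero, Fin.cons_succ]
      funext t
      refine Fin.cases ?_ (fun t => ?_) t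
      · simp only [Pi.add_apply, Finset.sum_apply, zsmul_eq_mul]
        simp [h0]
      · simp only [Pi.add_apply, Finset.sum_apply, zsmul_eq_mul]
        simp [hc'])
    intro r
    simpa using this r.succ
  · apply Set.Subset.antisymm
    · intro y hy
      refine AddSubgroup.closure_induction (p := fun y _ => ∀ i j : Fin n, ∃ z : ℤ,
            (∑ t, ((γ i t : ℝ) - (γ j t : ℝ)) * y t) = (z : ℝ)) ?_ ?_ ?_ ?_ hy
      · rintro _ ⟨r, rfl⟩
        exact key r
      · intro i j
        exact ⟨0, by simp⟩
      · intro x y _ _ hx hy i j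
        obtain ⟨a, ha⟩ := hx i j
        obtain ⟨b, hb⟩ := hy i j
        exact ⟨a + b, by simp [mul_add, Finset.sum_add_distrib, ha, hb]⟩
      · intro x _ hx i j
        obtain ⟨a, ha⟩ := hx i j
        exact ⟨-a, by simp [ha]⟩
    · intro y hy
      let x : Fin (k + 1) → ℝ := Fin.cons (-∑ t, (γ ⟨0, hn⟩ t : ℝ) * y t) y
      have hx : x ∈ (AddSubgroup.closure
          (Set.range (Fin.cons (Pi.single (0 : Fin (k + 1)) (1 : ℝ)) εt
            : Fin (k + 1) → Fin (k + 1) → ℝ)) : Set (Fin (k + 1) → ℝ)) := by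
        rw [hgen]
        intro j
        obtain ⟨z, hz⟩ := hy j ⟨0, hn⟩
        refine ⟨z, ?_⟩
        rw [← hz, Fin.sum_univ_succ]
        simp only [x, Fin.cons_zero, Fin.cons_succ, sub_mul, Finset.sum_sub_distrib]
        push_cast
        ring
      have hP : ∀ x ∈ AddSubgroup.closure
          (Set.range (Fin.cons (Pi.single (0 : Fin (k + 1)) (1 : ℝ)) εt
            : Fin (k + 1) → Fin (k + 1) → ℝ)), (fun t : Fin k => x t.succ) ∈
          AddSubgroup.closure (Set.range fun r : Fin k => fun t : Fin k => εt r t.succ) := by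
        intro x hx
        induction hx using AddSubgroup.closure_induction with
        | mem x hx =>
          obtain ⟨r, rfl⟩ := hx
          refine Fin.cases ?_ (fun r => ?_) r
          · convert AddSubgroup.zero_mem _ using 1
            funext t
            simp
          · exact AddSubgroup.subset_closure ⟨r, by simp⟩
        | zero => exact AddSubgroup.zero_mem _
        | add x y _ _ hx hy => exact AddSubgroup.add_mem _ hx hy
        | neg x _ hx => exact AddSubgroup.neg_mem _ hx
      have := hP x hx
      simpa [x] using this
end

section
/- Let k ≥ 0 be an integer and let p₁, p₂, n be integers greater than 2 satisfying k < p₁, p₂ − p₁ + k > p₁, and n − p₂ − k > p₁. Then the subset R̃ of ℝⁿ defined by the three equations Σ_{r=1}^{k} u_r² + Σ_{r=k+1}^{p₁} u_r² = p₁, Σ_{r=1}^{k} u_r² + Σ_{r=p₁+1}^{p₂} u_r² = p₂ − p₁ + k, and −Σ_{r=1}^{k} u_r² + Σ_{r=p₂+1}^{n} u_r² = n − p₂ − k, equipped with the subspace topology, is homeomorphic to the product of spheres S^{p₁−1} × S^{p₂−p₁−1} × S^{n−p₂−1} (unit spheres in ℝ^{p₁}, ℝ^{p₂−p₁}, ℝ^{n−p₂}).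 An explicit homeomorphism is u ↦ (u₁,…,u_{p₁}, (u_{p₁+1},…,u_{p₂})/√(p₂−p₁+k−Σ_{r≤k}u_r²), (u_{p₂+1},…,uₙ)/√(n−p₂−k+Σ_{r≤k}u_r²)). -/
open Finset

lemma aux_sum_block (n a b : ℕ) (hb : b ≤ n) (hab : a ≤ b) (f : Fin n → ℝ) :
    ∑ r ∈ univ.filter (fun r : Fin n => a ≤ (r : ℕ) ∧ (r : ℕ) < b), f r
      = ∑ i : Fin (b - a), f ⟨a + i, by omega⟩ := by
  symm
  refine Finset.sum_bij (fun i _ => (⟨a + i, by omega⟩ : Fin n)) ?_ ?_ ?_ ?_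
  · intro i _
    simp only [mem_filter, mem_univ, true_and]
    omega
  · intro i _ j _ h
    simp only [Fin.mk.injEq] at h
    ext
    omega
  · intro r hr
    simp only [mem_filter, mem_univ, true_and] at hr
    refine ⟨⟨r - a, by omega⟩, mem_univ _, ?_⟩
    ext
    simp only
    omega
  · intro i _
    rfl

lemma aux_sum_init (n b : ℕ) (hb : b ≤ n) (f : Fin n → ℝ) :
    ∑ r ∈ univ.filter (fun r : Fin n => (r : ℕ) < b), f r
      = ∑ i : Fin b, f ⟨i, by omega⟩ := by
  symm
  refine Finset.sum_bij (fun i _ => (⟨i, by omega⟩ : Fin n)) ?_ ?_ ?_ ?_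
  · intro i _
    simp
  · intro i _ j _ h
    simp only [Fin.mk.injEq] at h
    ext
    omega
  · intro r hr
    simp only [mem_filter, mem_univ, true_and] at hr
    exact ⟨⟨r, hr⟩, mem_univ _, rfl⟩
  · intro i _
    rfl

lemma aux_sum_split (n k b : ℕ) (hb : b ≤ n) (hk : k ≤ b) (f : Fin n → ℝ) :
    (∑ r ∈ univ.filter (fun r : Fin n => (r : ℕ) < k), f r)
      + ∑ r ∈ univ.filter (fun r : Fin n => k ≤ (r : ℕ) ∧ (r : ℕ) < b), f r
      = ∑ i : Fin b, f ⟨i, by omega⟩ := by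
  rw [← aux_sum_init n b hb f, ← Finset.sum_union]
  · congr 1
    ext r
    simp only [mem_union, mem_filter, mem_univ, true_and]
    omega
  · rw [Finset.disjoint_left]
    intro r
    simp only [mem_filter, mem_univ, true_and]
    omega

lemma aux_mem_sphere (m : ℕ) (x : EuclideanSpace ℝ (Fin m)) :
    x ∈ Metric.sphere (0 : EuclideanSpace ℝ (Fin m)) 1 ↔ ∑ i, x i ^ 2 = 1 := by
  rw [mem_sphere_zero_iff_norm, EuclideanSpace.norm_eq, Real.sqrt_eq_one]
  simp

lemma aux_div (m : ℕ) (f : Fin m → ℝ) (c : ℝ) (hc : 0 < c) (h : ∑ i, f i ^ 2 = c) :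
    ∑ i, (f i / √c) ^ 2 = 1 := by
  simp only [div_pow, Real.sq_sqrt hc.le]
  rw [← Finset.sum_div, h, div_self hc.ne']

lemma aux_mul (m : ℕ) (f : Fin m → ℝ) (c : ℝ) (hc : 0 < c) (h : ∑ i, f i ^ 2 = 1) :
    ∑ i, (√c * f i) ^ 2 = c := by
  simp only [mul_pow, Real.sq_sqrt hc.le]
  rw [← Finset.mul_sum, h, mul_one]

lemma aux_le (k p : ℕ) (h : k ≤ p) (f : Fin p → ℝ) :
    ∑ i : Fin k, f ⟨i, by omega⟩ ^ 2 ≤ ∑ i, f i ^ 2 := by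
  rw [← aux_sum_init p k h (fun i => f i ^ 2)]
  exact Finset.sum_le_sum_of_subset_of_nonneg (Finset.filter_subset _ _)
    (fun _ _ _ => sq_nonneg _)

/-- The inverse map of the explicit homeomorphism, on coordinates. -/
noncomputable def auxInv (k p₁ p₂ n : ℕ) (h1 : k ≤ p₁) (c₂ c₃ : ℝ)
    (x : Fin p₁ → ℝ) (y : Fin (p₂ - p₁) → ℝ) (z : Fin (n - p₂) → ℝ) : Fin n → ℝ := fun r =>
  if h : (r : ℕ) < p₁ then √(p₁ : ℝ) * x ⟨r, h⟩
  else if h' : (r : ℕ) < p₂ then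
    √(c₂ - ∑ i : Fin k, (√(p₁ : ℝ) * x ⟨i, by omega⟩) ^ 2) * y ⟨r - p₁, by omega⟩
  else √(c₃ + ∑ i : Fin k, (√(p₁ : ℝ) * x ⟨i, by omega⟩) ^ 2) * z ⟨r - p₂, by omega⟩

section
variable (k p₁ p₂ n : ℕ) (h1 : k ≤ p₁) (c₂ c₃ : ℝ)
    (x : Fin p₁ → ℝ) (y : Fin (p₂ - p₁) → ℝ) (z : Fin (n - p₂) → ℝ)

lemma auxInv_1 (i : ℕ) (hi : i < p₁) (hn : i < n) :
    auxInv k p₁ p₂ n h1 c₂ c₃ x y z ⟨i, hn⟩ = √(p₁ : ℝ) * x ⟨i, hi⟩ := by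
  simp [auxInv, hi]

lemma auxInv_2 (i : Fin (p₂ - p₁)) (hn : p₁ + i < n) :
    auxInv k p₁ p₂ n h1 c₂ c₃ x y z ⟨p₁ + i, hn⟩ =
      √(c₂ - ∑ i : Fin k, (√(p₁ : ℝ) * x ⟨i, by omega⟩) ^ 2) * y i := by
  have : p₁ + (i : ℕ) < p₂ := by omega
  simp [auxInv, this]

lemma auxInv_3 (hp : p₁ ≤ p₂) (i : Fin (n - p₂)) (hn : p₂ + i < n) :
    auxInv k p₁ p₂ n h1 c₂ c₃ x y z ⟨p₂ + i, hn⟩ =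
      √(c₃ + ∑ i : Fin k, (√(p₁ : ℝ) * x ⟨i, by omega⟩) ^ 2) * z i := by
  have : ¬ p₂ + (i : ℕ) < p₁ := by omega
  simp [auxInv, this]

end

lemma aux_homeo (k p₁ p₂ n : ℕ) (h0 : 0 < p₁) (h1 : k ≤ p₁) (h2 : p₁ ≤ p₂) (h3 : p₂ ≤ n)
    (c₂ c₃ : ℝ) (hc₂ : (p₁ : ℝ) < c₂) (hc₃ : 0 < c₃) (S : Set (Fin n → ℝ))
    (hS : ∀ u, u ∈ S ↔ (∑ i : Fin p₁, u ⟨i, by omega⟩ ^ 2 = p₁ ∧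
      (∑ i : Fin (p₂ - p₁), u ⟨p₁ + i, by omega⟩ ^ 2)
        = c₂ - (∑ i : Fin k, u ⟨i, by omega⟩ ^ 2) ∧
      (∑ i : Fin (n - p₂), u ⟨p₂ + i, by omega⟩ ^ 2)
        = c₃ + (∑ i : Fin k, u ⟨i, by omega⟩ ^ 2))) :
    Nonempty (S ≃ₜ (Metric.sphere (0 : EuclideanSpace ℝ (Fin p₁)) 1
          × Metric.sphere (0 : EuclideanSpace ℝ (Fin (p₂ - p₁))) 1
          × Metric.sphere (0 : EuclideanSpace ℝ (Fin (n - p₂))) 1)) := by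
  have hp : (0 : ℝ) < p₁ := by exact_mod_cast h0
  have P2 : ∀ u ∈ S, 0 < c₂ - ∑ i : Fin k, u ⟨i, by omega⟩ ^ 2 := by
    intro u hu
    have := aux_le k p₁ h1 (fun i => u ⟨i, by omega⟩)
    have h := ((hS u).1 hu).1
    simp only at this
    linarith
  have P3 : ∀ u : Fin n → ℝ, 0 < c₃ + ∑ i : Fin k, u ⟨i, by omega⟩ ^ 2 := by
    intro u
    positivity
  have Q2 : ∀ x ∈ Metric.sphere (0 : EuclideanSpace ℝ (Fin p₁)) 1,
      0 < c₂ - ∑ i : Fin k, (√(p₁ : ℝ) * x ⟨i, by omega⟩) ^ 2 := by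
    intro x hx
    rw [aux_mem_sphere] at hx
    have a := aux_le k p₁ h1 (fun i => √(p₁ : ℝ) * x i)
    have b := aux_mul p₁ (fun i => x i) p₁ hp hx
    simp only at a b
    linarith
  have Q3 : ∀ x : EuclideanSpace ℝ (Fin p₁),
      0 < c₃ + ∑ i : Fin k, (√(p₁ : ℝ) * x ⟨i, by omega⟩) ^ 2 := by
    intro x
    positivity
  refine ⟨{
    toFun := fun u =>
      (⟨WithLp.toLp 2 (fun i => u.1 ⟨i, by omega⟩ / √(p₁ : ℝ)), ?_⟩,
       ⟨WithLp.toLp 2 (fun i => u.1 ⟨p₁ + i, by omega⟩ /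
          √(c₂ - ∑ i : Fin k, u.1 ⟨i, by omega⟩ ^ 2)), ?_⟩,
       ⟨WithLp.toLp 2 (fun i => u.1 ⟨p₂ + i, by omega⟩ /
          √(c₃ + ∑ i : Fin k, u.1 ⟨i, by omega⟩ ^ 2)), ?_⟩)
    invFun := fun w => ⟨auxInv k p₁ p₂ n h1 c₂ c₃ w.1.1 w.2.1.1 w.2.2.1, ?_⟩
    left_inv := ?_
    right_inv := ?_
    continuous_toFun := ?_
    continuous_invFun := ?_ }⟩
  · rw [aux_mem_sphere]
    exact aux_div _ _ _ hp ((hS u.1).1 u.2).1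
  · rw [aux_mem_sphere]
    exact aux_div _ _ _ (P2 u.1 u.2) ((hS u.1).1 u.2).2.1
  · rw [aux_mem_sphere]
    exact aux_div _ _ _ (P3 u.1) ((hS u.1).1 u.2).2.2
  · obtain ⟨⟨x, hx⟩, ⟨y, hy⟩, ⟨z, hz⟩⟩ := w
    have q2 := Q2 x hx
    have q3 := Q3 x
    rw [aux_mem_sphere] at hx hy hz
    rw [hS]
    have e : ∀ i : Fin k, (i : ℕ) < p₁ := fun i => by omega
    simp only [auxInv_1 k p₁ p₂ n h1 _ _ _ _ _ _ (e _), auxInv_1 k p₁ p₂ n h1 _ _ _ _ _ _ (Fin.is_lt _),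
      auxInv_2, auxInv_3 k p₁ p₂ n h1 _ _ _ _ _ h2]
    exact ⟨aux_mul _ _ _ hp hx, aux_mul _ _ _ q2 hy, aux_mul _ _ _ q3 hz⟩
  · rintro ⟨u, hu⟩
    have q2 := Real.sqrt_pos.2 (P2 u hu)
    have q3 := Real.sqrt_pos.2 (P3 u)
    have q1 := Real.sqrt_pos.2 hp
    apply Subtype.ext
    funext r
    simp only [auxInv, mul_div_cancel₀ _ q1.ne']
    split_ifs with h h'
    · rfl
    · rw [mul_div_cancel₀ _ q2.ne']
      congr 1
      ext
      simp only
      omega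
    · rw [mul_div_cancel₀ _ q3.ne']
      congr 1
      ext
      simp only
      omega
  · rintro ⟨⟨x, hx⟩, ⟨y, hy⟩, ⟨z, hz⟩⟩
    have q1 := Real.sqrt_pos.2 hp
    have q2 := Real.sqrt_pos.2 (Q2 x hx)
    have q3 := Real.sqrt_pos.2 (Q3 x)
    have e : ∀ i : Fin k, (i : ℕ) < p₁ := fun i => by omega
    refine Prod.ext (Subtype.ext ?_) (Prod.ext (Subtype.ext ?_) (Subtype.ext ?_))
    · ext i
      simp only [auxInv_1 k p₁ p₂ n h1 _ _ _ _ _ _ (Fin.is_lt _)]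
      exact mul_div_cancel_left₀ _ q1.ne'
    · ext i
      simp only [auxInv_1 k p₁ p₂ n h1 _ _ _ _ _ _ (e _), auxInv_2]
      exact mul_div_cancel_left₀ _ q2.ne'
    · ext i
      simp only [auxInv_1 k p₁ p₂ n h1 _ _ _ _ _ _ (e _), auxInv_3 k p₁ p₂ n h1 _ _ _ _ _ h2]
      exact mul_div_cancel_left₀ _ q3.ne'
  · have g2 : ∀ u : S, √(c₂ - ∑ i : Fin k, u.1 ⟨i, by omega⟩ ^ 2) ≠ 0 :=
      fun u => (Real.sqrt_pos.2 (P2 u.1 u.2)).ne'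
    have g3 : ∀ u : S, √(c₃ + ∑ i : Fin k, u.1 ⟨i, by omega⟩ ^ 2) ≠ 0 :=
      fun u => (Real.sqrt_pos.2 (P3 u.1)).ne'
    have ev : ∀ j : Fin n, Continuous (fun a : S => a.1 j) :=
      fun j => (continuous_apply j).comp continuous_subtype_val
    have es : Continuous (fun a : S => ∑ i : Fin k, a.1 ⟨i, by omega⟩ ^ 2) :=
      continuous_finset_sum _ fun j _ => (ev _).pow 2
    refine Continuous.prodMk ?_ (Continuous.prodMk ?_ ?_)
    · refine Continuous.subtype_mk ((PiLp.continuous_toLp 2 _).comp (continuous_pi fun i => ?_)) _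
      exact (ev _).div_const _
    · refine Continuous.subtype_mk ((PiLp.continuous_toLp 2 _).comp (continuous_pi fun i => ?_)) _
      exact Continuous.div (ev _) (continuous_const.sub es).sqrt g2
    · refine Continuous.subtype_mk ((PiLp.continuous_toLp 2 _).comp (continuous_pi fun i => ?_)) _
      exact Continuous.div (ev _) (continuous_const.add es).sqrt g3
  · refine Continuous.subtype_mk (continuous_pi fun r => ?_) _
    unfold auxInv
    split_ifs <;> fun_prop

/-- system `threesphereeq` in the proof of Theorem `threespheretheo`.
For `k ≥ 0` and `p₁, p₂, n > 2` with `k < p₁`, `p₂ − p₁ + k > p₁`, `n − p₂ − k > p₁`,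
the subset of `ℝⁿ` cut out by the three quadratic equations is homeomorphic to the
product of spheres `S^{p₁−1} × S^{p₂−p₁−1} × S^{n−p₂−1}`. -/
theorem stmt_6 (k p₁ p₂ n : ℕ) (hp₁ : 2 < p₁) (hp₂ : 2 < p₂) (hn : 2 < n)
    (h1 : k < p₁)
    (h2 : (p₁ : ℤ) < (p₂ : ℤ) - (p₁ : ℤ) + (k : ℤ))
    (h3 : (p₁ : ℤ) < (n : ℤ) - (p₂ : ℤ) - (k : ℤ)) :
    Nonempty
      ((({u : Fin n → ℝ |
          ((∑ r ∈ univ.filter (fun r : Fin n => (r : ℕ) < k), u r ^ 2)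
            + ∑ r ∈ univ.filter (fun r : Fin n => k ≤ (r : ℕ) ∧ (r : ℕ) < p₁), u r ^ 2)
            = (p₁ : ℝ) ∧
          ((∑ r ∈ univ.filter (fun r : Fin n => (r : ℕ) < k), u r ^ 2)
            + ∑ r ∈ univ.filter (fun r : Fin n => p₁ ≤ (r : ℕ) ∧ (r : ℕ) < p₂), u r ^ 2)
            = (p₂ : ℝ) - (p₁ : ℝ) + (k : ℝ) ∧
          (-(∑ r ∈ univ.filter (fun r : Fin n => (r : ℕ) < k), u r ^ 2)
            + ∑ r ∈ univ.filter (fun r : Fin n => p₂ ≤ (r : ℕ)), u r ^ 2)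
            = (n : ℝ) - (p₂ : ℝ) - (k : ℝ)} : Set (Fin n → ℝ)))
      ≃ₜ (Metric.sphere (0 : EuclideanSpace ℝ (Fin p₁)) 1
          × Metric.sphere (0 : EuclideanSpace ℝ (Fin (p₂ - p₁))) 1
          × Metric.sphere (0 : EuclideanSpace ℝ (Fin (n - p₂))) 1)) := by
  have h2' : p₁ < p₂ := by omega
  have h3' : p₂ < n := by omega
  have h2r : (p₁ : ℝ) < (p₂ : ℝ) - (p₁ : ℝ) + (k : ℝ) := by exact_mod_cast h2
  have h3r : (p₁ : ℝ) < (n : ℝ) - (p₂ : ℝ) - (k : ℝ) := by exact_mod_cast h3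
  refine aux_homeo k p₁ p₂ n (by omega) h1.le h2'.le h3'.le _ _ h2r
    (lt_of_le_of_lt (Nat.cast_nonneg _) h3r) _ ?_
  intro u
  have e3 : ∑ r ∈ univ.filter (fun r : Fin n => p₂ ≤ (r : ℕ)), u r ^ 2
      = ∑ i : Fin (n - p₂), u ⟨p₂ + i, by omega⟩ ^ 2 := by
    rw [← aux_sum_block n p₂ n le_rfl h3'.le (fun r => u r ^ 2)]
    congr 1
    ext r
    simp
  have e2 := aux_sum_block n p₁ p₂ h3'.le h2'.le (fun r => u r ^ 2)
  have e1 := aux_sum_split n k p₁ (by omega) h1.le (fun r => u r ^ 2)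
  have e0 := aux_sum_init n k (by omega) (fun r => u r ^ 2)
  rw [Set.mem_setOf_eq, e1, e2, e3, e0]
  refine and_congr Iff.rfl (and_congr ?_ ?_)
  · constructor <;> intro h <;> linarith
  · constructor <;> intro h <;> linarith
end

section
/- Let γ̃₁,…,γ̃ₙ ∈ ℤᵈ, δ ∈ ℝᵈ, and let R̃ = {u ∈ ℝⁿ : Σ_{j=1}^{n} (uⱼ)²·γ̃ⱼ = δ}. Let J(1),…,J(n) ≥ 1 be positive integers and let R̃^J = {w = (w_{j,s})_{1≤j≤n, 1≤s≤J(j)} : Σ_{j=1}^{n} (Σ_{s=1}^{J(j)} w_{j,s}²)·γ̃ⱼ = δ} be the multiwedge of R̃. If for every u ∈ R̃ the ℤ-span of {γ̃ⱼ : uⱼ ≠ 0} equals the ℤ-span of {γ̃₁,…,γ̃ₙ}, then for every w ∈ R̃^J the ℤ-span of {γ̃ⱼ : w_{j,s} ≠ 0 for some s} equals the ℤ-span of {γ̃₁,…,γ̃ₙ}. -/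
/-- lattice form of Lemma `multiwedgedelzant`.
If for every point `u` of the real moment-angle manifold `R̃ = {u : Σⱼ uⱼ²·γ̃ⱼ = δ}` the
ℤ-span of `{γ̃ⱼ : uⱼ ≠ 0}` equals the ℤ-span of all the `γ̃ⱼ`, then the same holds for
every point `w` of the multiwedge `R̃^J` (obtained by repeating the variable `uⱼ`
exactly `J(j) ≥ 1` times). -/
theorem stmt_9 (n d : ℕ) (γ : Fin n → (Fin d → ℤ)) (δ : Fin d → ℝ)
    (J : Fin n → ℕ) (hJ : ∀ j, 1 ≤ J j)
    (h : ∀ u : Fin n → ℝ, (∀ r : Fin d, ∑ j, u j ^ 2 * (γ j r : ℝ) = δ r) →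
      AddSubgroup.closure {v : Fin d → ℤ | ∃ j : Fin n, u j ≠ 0 ∧ v = γ j}
        = AddSubgroup.closure (Set.range γ)) :
    ∀ w : (j : Fin n) → Fin (J j) → ℝ,
      (∀ r : Fin d, ∑ j, (∑ s, w j s ^ 2) * (γ j r : ℝ) = δ r) →
      AddSubgroup.closure {v : Fin d → ℤ | ∃ j : Fin n, (∃ s, w j s ≠ 0) ∧ v = γ j}
        = AddSubgroup.closure (Set.range γ) := by
  intro w hw
  have hnn : ∀ j, 0 ≤ ∑ s, w j s ^ 2 := fun j => Finset.sum_nonneg fun s _ => sq_nonneg _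
  have key : ∀ j, Real.sqrt (∑ s, w j s ^ 2) ≠ 0 ↔ ∃ s, w j s ≠ 0 := by
    intro j
    rw [Ne, Real.sqrt_eq_zero (hnn j), Finset.sum_eq_zero_iff_of_nonneg (fun s _ => sq_nonneg _)]
    simp
  have := h (fun j => Real.sqrt (∑ s, w j s ^ 2)) (by
    intro r
    rw [← hw r]
    exact Finset.sum_congr rfl fun j _ => by rw [Real.sq_sqrt (hnn j)])
  simpa only [key] using this
end
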